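/- Margin preservation by leverage-score feature selection: there is an absolute constant c > 0 with the following property. In the SVM dual setup, let ε ∈ (0,1), let X ∈ ℝ^{p×d} have rank ρ and compact singular value decomposition X = UΣV^T, define leverage-score probabilities p_i = ‖v_i‖₂²/ρ for i = 1,…,d where v_i is the i-th row of V, let r ≥ c·(ρ/ε²)·log(10ρ/ε²), draw indices j_1,…,j_r i.i.d. from (p_1,…,p_d), and let R ∈ ℝ^{d×r} be the random matrix whose t-th column is (1/√(r·p_{j_t}))·e_{j_t}. Then with probability at least 0.99 the following holds: for every α* ∈ K maximizing f over K with Σ_i α*_i = ‖X^T Y α*‖₂² and every α̃* ∈ K maximizing f̃ over K with Σ_i α̃*_i = ‖R^T X^T Y α̃*‖₂², one has (1 − ε)·‖R^T X^T Y α̃*‖₂² ≤ ‖X^T Y α*‖₂². -/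

import Mathlib

open Matrix

/-- Euclidean norm of a vector in ℝ^n. -/
noncomputable def euclNorm {n : ℕ} (x : Fin n → ℝ) : ℝ := Real.sqrt (∑ i, x i ^ 2)

/-- Spectral norm (ℓ₂ operator norm) of a real matrix: the supremum of `‖A x‖₂`
over unit vectors `x`. -/
noncomputable def specNorm {m n : ℕ} (A : Matrix (Fin m) (Fin n) ℝ) : ℝ :=
  sSup {c : ℝ | ∃ x : Fin n → ℝ, euclNorm x = 1 ∧ c = euclNorm (A.mulVec x)}

/-- The SVM dual feasible set `K = {α : 0 ≤ αᵢ ≤ C, Σᵢ yᵢαᵢ = 0}`. -/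
def svmFeasible {p : ℕ} (y : Fin p → ℝ) (C : ℝ) (α : Fin p → ℝ) : Prop :=
  (∀ i, 0 ≤ α i ∧ α i ≤ C) ∧ ∑ i, y i * α i = 0

/-- The SVM dual objective `f(α) = Σᵢ αᵢ − (1/2)‖XᵀYα‖₂²`, where `Y = diag(y)`. -/
noncomputable def svmDualObj {p d : ℕ} (X : Matrix (Fin p) (Fin d) ℝ) (y : Fin p → ℝ)
    (α : Fin p → ℝ) : ℝ :=
  ∑ i, α i - (1 / 2) * euclNorm (Xᵀ.mulVec ((Matrix.diagonal y).mulVec α)) ^ 2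

/-- The reduced SVM dual objective `f̃(α) = Σᵢ αᵢ − (1/2)‖RᵀXᵀYα‖₂²`. -/
noncomputable def svmDualObjRed {p d r : ℕ} (X : Matrix (Fin p) (Fin d) ℝ)
    (R : Matrix (Fin d) (Fin r) ℝ) (y : Fin p → ℝ) (α : Fin p → ℝ) : ℝ :=
  ∑ i, α i - (1 / 2) * euclNorm (Rᵀ.mulVec (Xᵀ.mulVec ((Matrix.diagonal y).mulVec α))) ^ 2

/-- The leverage-score probabilities `p_i = ‖v_i‖₂²/ρ`, where `v_i` is the
`i`-th row of `V ∈ ℝ^{d×ρ}`. -/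
noncomputable def lvgProb {d ρ : ℕ} (V : Matrix (Fin d) (Fin ρ) ℝ) (i : Fin d) : ℝ :=
  (∑ k, V i k ^ 2) / ρ

/-- The sampling-and-rescaling matrix `R ∈ ℝ^{d×r}` determined by the drawn
indices `j_1,…,j_r`: the `t`-th column is `(1/√(r·p_{j_t}))·e_{j_t}`. -/
noncomputable def lvgMatrix {d ρ : ℕ} (V : Matrix (Fin d) (Fin ρ) ℝ) (r : ℕ)
    (j : Fin r → Fin d) : Matrix (Fin d) (Fin r) ℝ :=
  Matrix.of fun i t => if i = j t then 1 / Real.sqrt (r * lvgProb V (j t)) else 0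


theorem aux_spec {n : ℕ} {N : Matrix (Fin n) (Fin n) ℝ} (hN : N.IsHermitian) :
    ∃ (lam : Fin n → ℝ) (u : Fin n → Fin n → ℝ),
      (∀ i j, u i ⬝ᵥ u j = if i = j then 1 else 0) ∧
      (∀ k x, x ⬝ᵥ (N ^ k *ᵥ x) = ∑ i, lam i ^ k * (u i ⬝ᵥ x) ^ 2) ∧
      (∀ k, (N ^ k).trace = ∑ i, lam i ^ k) := by
  obtain ⟨W, lam, hW1, hW2, hNW⟩ : ∃ (W : Matrix (Fin n) (Fin n) ℝ) (lam : Fin n → ℝ),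
      Wᵀ * W = 1 ∧ W * Wᵀ = 1 ∧ N = W * diagonal lam * Wᵀ := by
    refine ⟨(hN.eigenvectorUnitary : Matrix _ _ ℝ), hN.eigenvalues, ?_, ?_, ?_⟩
    · have := Unitary.coe_star_mul_self hN.eigenvectorUnitary
      rwa [star_eq_conjTranspose, conjTranspose_eq_transpose_of_trivial] at this
    · have := Unitary.coe_mul_star_self hN.eigenvectorUnitary
      rwa [Unitary.coe_star, star_eq_conjTranspose, conjTranspose_eq_transpose_of_trivial] at this
    · have := hN.spectral_theorem
      rw [Unitary.conjStarAlgAut_apply] at this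
      rw [star_eq_conjTranspose, conjTranspose_eq_transpose_of_trivial] at this
      exact this
  have hpow : ∀ k, N ^ k = W * diagonal (fun i => lam i ^ k) * Wᵀ := by
    intro k
    induction k with
    | zero => simp [hW2]
    | succ k ih =>
      rw [pow_succ, ih]
      nth_rewrite 1 [hNW]
      calc W * diagonal (fun i => lam i ^ k) * Wᵀ * (W * diagonal lam * Wᵀ)
          = W * diagonal (fun i => lam i ^ k) * (Wᵀ * W) * (diagonal lam * Wᵀ) := by
            simp only [Matrix.mul_assoc]
        _ = W * (diagonal (fun i => lam i ^ k) * diagonal lam) * Wᵀ := by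
            rw [hW1]; simp only [Matrix.mul_assoc, Matrix.one_mul]
        _ = _ := by rw [diagonal_mul_diagonal]; simp only [pow_succ]
  refine ⟨lam, fun i => Wᵀ i, ?_, ?_, ?_⟩
  · intro i j
    have := congrFun (congrFun hW1 i) j
    rw [Matrix.one_apply] at this
    rw [← this]; rfl
  · intro k x
    rw [hpow, ← mulVec_mulVec, ← mulVec_mulVec, dotProduct_mulVec, ← mulVec_transpose]
    simp only [dotProduct, mulVec_diagonal]
    refine Finset.sum_congr rfl fun i _ => ?_
    simp only [mulVec, dotProduct]; ring
  · intro k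
    rw [hpow, Matrix.trace_mul_comm, ← Matrix.mul_assoc, hW1, Matrix.one_mul, trace_diagonal]

theorem aux_cheb {n : ℕ} {N : Matrix (Fin n) (Fin n) ℝ} (hN : N.PosSemidef)
    (w : Fin n → ℝ) (j k : ℕ) :
    (w ⬝ᵥ (N ^ j *ᵥ w)) * (w ⬝ᵥ (N ^ k *ᵥ w)) ≤ (w ⬝ᵥ w) * (w ⬝ᵥ (N ^ (j + k) *ᵥ w)) := by
  obtain ⟨lam, u, ho, hq, -⟩ := aux_spec hN.isHermitian
  have h0 : w ⬝ᵥ w = ∑ i, lam i ^ 0 * (u i ⬝ᵥ w) ^ 2 := by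
    rw [← hq]; simp
  have hl : ∀ i, 0 ≤ lam i := by
    intro i
    have h1 := hq 1 (u i)
    simp only [pow_one, ho] at h1
    simp at h1
    have := hN.dotProduct_mulVec_nonneg (u i)
    simp at this
    linarith
  rw [h0, hq, hq, hq]
  set c := fun i => (u i ⬝ᵥ w) ^ 2 with hc
  have hc0 : ∀ i, 0 ≤ c i := fun i => sq_nonneg _
  have key : 0 ≤ ∑ i, ∑ l, c i * c l * ((lam i ^ j - lam l ^ j) * (lam i ^ k - lam l ^ k)) := by
    refine Finset.sum_nonneg fun i _ => Finset.sum_nonneg fun l _ => ?_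
    refine mul_nonneg (mul_nonneg (hc0 i) (hc0 l)) ?_
    rcases le_total (lam i) (lam l) with h | h
    · exact mul_nonneg_of_nonpos_of_nonpos
        (sub_nonpos.2 (pow_le_pow_left₀ (hl i) h j)) (sub_nonpos.2 (pow_le_pow_left₀ (hl i) h k))
    · exact mul_nonneg
        (sub_nonneg.2 (pow_le_pow_left₀ (hl l) h j)) (sub_nonneg.2 (pow_le_pow_left₀ (hl l) h k))
  have e : ∑ i, ∑ l, c i * c l * ((lam i ^ j - lam l ^ j) * (lam i ^ k - lam l ^ k))
      = (∑ i, lam i ^ (j+k) * c i) * (∑ l, lam l ^ 0 * c l)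
        + (∑ i, lam i ^ 0 * c i) * (∑ l, lam l ^ (j+k) * c l)
        - (∑ i, lam i ^ j * c i) * (∑ l, lam l ^ k * c l)
        - (∑ i, lam i ^ k * c i) * (∑ l, lam l ^ j * c l) := by
    simp only [Finset.sum_mul_sum, ← Finset.sum_add_distrib, ← Finset.sum_sub_distrib]
    refine Finset.sum_congr rfl fun i _ => Finset.sum_congr rfl fun l _ => ?_
    ring
  rw [e] at key
  change (∑ i, lam i ^ j * c i) * (∑ l, lam l ^ k * c l)
    ≤ (∑ i, lam i ^ 0 * c i) * (∑ l, lam l ^ (j+k) * c l)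
  nlinarith

theorem aux_tele {n : ℕ} (A B : Matrix (Fin n) (Fin n) ℝ) (k : ℕ) :
    A ^ k - B ^ k = ∑ j ∈ Finset.range k, B ^ (k - 1 - j) * (A - B) * A ^ j := by
  induction k with
  | zero => simp
  | succ k ih =>
    rw [Finset.sum_range_succ]
    have : ∑ j ∈ Finset.range k, B ^ (k + 1 - 1 - j) * (A - B) * A ^ j
        = B * ∑ j ∈ Finset.range k, B ^ (k - 1 - j) * (A - B) * A ^ j := by
      rw [Finset.mul_sum]
      refine Finset.sum_congr rfl fun j hj => ?_
      have hj := Finset.mem_range.1 hj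
      rw [show k + 1 - 1 - j = (k - 1 - j) + 1 by omega, pow_succ']
      simp only [Matrix.mul_assoc]
    rw [this, ← ih]
    simp only [Nat.add_sub_cancel, Nat.sub_self, pow_zero, Matrix.one_mul, pow_succ']
    noncomm_ring

/-- one step of the potential -/
theorem aux_step {n : ℕ} {N N' : Matrix (Fin n) (Fin n) ℝ} (hN : N.PosSemidef)
    (hN' : N'.PosSemidef) (w : Fin n → ℝ) (η ρ : ℝ) (hη : 0 ≤ η) (hw : w ⬝ᵥ w ≤ ρ)
    (h : N - N' = η • vecMulVec w w) (m : ℕ) :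
    (N' ^ (m + 2)).trace ≤ (N ^ (m + 2)).trace
      - (m + 2 : ℝ) * η * (w ⬝ᵥ (N ^ (m + 1) *ᵥ w) - (m + 2 : ℝ) * η * ρ * (w ⬝ᵥ (N ^ m *ᵥ w))) := by
  have ha : ∀ k, 0 ≤ w ⬝ᵥ (N ^ k *ᵥ w) := fun k => by
    simpa using (hN.pow k).dotProduct_mulVec_nonneg w
  have hb : ∀ k, 0 ≤ w ⬝ᵥ (N' ^ k *ᵥ w) := fun k => by
    simpa using (hN'.pow k).dotProduct_mulVec_nonneg w
  -- renewal equation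
  have hren : ∀ k j, w ⬝ᵥ ((N' ^ k * N ^ j) *ᵥ w) = w ⬝ᵥ (N' ^ (k + j) *ᵥ w)
      + η * ∑ i ∈ Finset.range j,
        (w ⬝ᵥ (N' ^ (k + (j - 1 - i)) *ᵥ w)) * (w ⬝ᵥ (N ^ i *ᵥ w)) := by
    intro k j
    have h1 : N ^ j = N' ^ j + ∑ i ∈ Finset.range j, N' ^ (j - 1 - i) * (N - N') * N ^ i := by
      rw [← aux_tele]; abel
    rw [h1, mul_add, add_mulVec, dotProduct_add, ← pow_add, Finset.mul_sum, sum_mulVec,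
      dotProduct_sum, Finset.mul_sum]
    congr 1
    refine Finset.sum_congr rfl fun i _ => ?_
    rw [h, ← Matrix.mul_assoc, ← Matrix.mul_assoc, ← pow_add, Matrix.mul_smul, Matrix.smul_mul,
      smul_mulVec, dotProduct_smul, smul_eq_mul, ← mulVec_mulVec, ← mulVec_mulVec,
      vecMulVec_mulVec]
    congr 1
    simp [mulVec_smul]
    ring
  have hren0 : ∀ j, w ⬝ᵥ (N ^ j *ᵥ w) = w ⬝ᵥ (N' ^ j *ᵥ w)
      + η * ∑ i ∈ Finset.range j,
        (w ⬝ᵥ (N' ^ (j - 1 - i) *ᵥ w)) * (w ⬝ᵥ (N ^ i *ᵥ w)) := by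
    intro j
    simpa using hren 0 j
  have hba : ∀ j, w ⬝ᵥ (N' ^ j *ᵥ w) ≤ w ⬝ᵥ (N ^ j *ᵥ w) := by
    intro j
    rw [hren0 j]
    have : 0 ≤ η * ∑ i ∈ Finset.range j,
        (w ⬝ᵥ (N' ^ (j - 1 - i) *ᵥ w)) * (w ⬝ᵥ (N ^ i *ᵥ w)) :=
      mul_nonneg hη (Finset.sum_nonneg fun i _ => mul_nonneg (hb _) (ha _))
    linarith
  have hmix : ∀ k j, w ⬝ᵥ (N' ^ (k + j) *ᵥ w) ≤ w ⬝ᵥ ((N' ^ k * N ^ j) *ᵥ w) := by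
    intro k j
    rw [hren k j]
    have : 0 ≤ η * ∑ i ∈ Finset.range j,
        (w ⬝ᵥ (N' ^ (k + (j - 1 - i)) *ᵥ w)) * (w ⬝ᵥ (N ^ i *ᵥ w)) :=
      mul_nonneg hη (Finset.sum_nonneg fun i _ => mul_nonneg (hb _) (ha _))
    linarith
  have htr : (m + 2 : ℝ) * η * (w ⬝ᵥ (N' ^ (m + 1) *ᵥ w))
      ≤ (N ^ (m + 2)).trace - (N' ^ (m + 2)).trace := by
    have h1 := aux_tele N' N (m + 2)
    have h2 : N' - N = -(η • vecMulVec w w) := by rw [← h]; abel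
    have h3 := congrArg Matrix.trace h1
    rw [trace_sub, trace_sum] at h3
    have h4 : ∀ j ∈ Finset.range (m + 2),
        (N ^ (m + 2 - 1 - j) * (N' - N) * N' ^ j).trace ≤ - (η * (w ⬝ᵥ (N' ^ (m + 1) *ᵥ w))) := by
      intro j hj
      have hj := Finset.mem_range.1 hj
      rw [h2, Matrix.mul_neg, Matrix.neg_mul, trace_neg, Matrix.mul_smul, Matrix.smul_mul,
        trace_smul, smul_eq_mul]
      have e : (N ^ (m + 2 - 1 - j) * vecMulVec w w * N' ^ j).trace
          = w ⬝ᵥ ((N' ^ j * N ^ (m + 2 - 1 - j)) *ᵥ w) := by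
        rw [Matrix.trace_mul_comm, ← Matrix.mul_assoc, mul_vecMulVec, trace_vecMulVec,
          dotProduct_comm]
      rw [e]
      have := hmix j (m + 2 - 1 - j)
      rw [show j + (m + 2 - 1 - j) = m + 1 by omega] at this
      have := mul_le_mul_of_nonneg_left this hη
      linarith
    have h5 := Finset.sum_le_sum h4
    rw [Finset.sum_const, Finset.card_range, nsmul_eq_mul] at h5
    rw [Nat.cast_add, Nat.cast_ofNat] at h5
    linarith
  have hlow : w ⬝ᵥ (N ^ (m + 1) *ᵥ w) - (m + 2 : ℝ) * η * ρ * (w ⬝ᵥ (N ^ m *ᵥ w))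
      ≤ w ⬝ᵥ (N' ^ (m + 1) *ᵥ w) := by
    rw [hren0 (m + 1)]
    have : ∑ i ∈ Finset.range (m + 1),
        (w ⬝ᵥ (N' ^ (m + 1 - 1 - i) *ᵥ w)) * (w ⬝ᵥ (N ^ i *ᵥ w))
        ≤ ∑ i ∈ Finset.range (m + 1), ρ * (w ⬝ᵥ (N ^ m *ᵥ w)) := by
      refine Finset.sum_le_sum fun i hi => ?_
      have hi := Finset.mem_range.1 hi
      have h1 := aux_cheb hN w (m + 1 - 1 - i) i
      rw [show m + 1 - 1 - i + i = m by omega] at h1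
      have h2 := mul_le_mul_of_nonneg_right (hba (m + 1 - 1 - i)) (ha i)
      have h3 := mul_le_mul_of_nonneg_right hw (ha m)
      linarith
    rw [Finset.sum_const, Finset.card_range, nsmul_eq_mul] at this
    rw [Nat.cast_add, Nat.cast_one] at this
    have h1 := mul_le_mul_of_nonneg_left this hη
    have hρ : 0 ≤ ρ := le_trans (by simpa using ha 0) hw
    have h2 : 0 ≤ η * (ρ * (w ⬝ᵥ (N ^ m *ᵥ w))) := mul_nonneg hη (mul_nonneg hρ (ha m))
    nlinarith
  have : (0:ℝ) ≤ (m + 2 : ℝ) * η := by positivity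
  have := mul_le_mul_of_nonneg_left hlow this
  linarith

theorem aux_trace_bd {n : ℕ} {N : Matrix (Fin n) (Fin n) ℝ} (hN : N.IsHermitian)
    (h1 : ∀ x : Fin n → ℝ, (1 / 2) * (x ⬝ᵥ x) ≤ x ⬝ᵥ (N *ᵥ x))
    (h2 : ∀ x : Fin n → ℝ, x ⬝ᵥ (N *ᵥ x) ≤ x ⬝ᵥ x) (m : ℕ) :
    (N ^ (m + 2)).trace ≤ (N ^ (m + 1)).trace ∧ (N ^ m).trace ≤ 4 * (N ^ (m + 2)).trace := by
  obtain ⟨lam, u, ho, hq, ht⟩ := aux_spec hN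
  have hl : ∀ i, u i ⬝ᵥ (N *ᵥ u i) = lam i := by
    intro i
    have h1 := hq 1 (u i)
    simp only [pow_one, ho] at h1
    simpa using h1
  have hlo : ∀ i, 1 / 2 ≤ lam i := fun i => by
    have := h1 (u i); rw [hl, ho] at this; simpa using this
  have hhi : ∀ i, lam i ≤ 1 := fun i => by
    have := h2 (u i); rw [hl, ho] at this; simpa using this
  rw [ht, ht, ht, Finset.mul_sum]
  constructor
  · refine Finset.sum_le_sum fun i _ => ?_
    have := hlo i
    exact pow_le_pow_of_le_one (by linarith) (hhi i) (by omega)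
  · refine Finset.sum_le_sum fun i _ => ?_
    have h3 := hlo i
    have h4 : 0 ≤ lam i ^ m := pow_nonneg (by linarith) m
    have h5 : 1 ≤ 4 * lam i ^ 2 := by nlinarith
    calc lam i ^ m = lam i ^ m * 1 := by ring
      _ ≤ lam i ^ m * (4 * lam i ^ 2) := mul_le_mul_of_nonneg_left h5 h4
      _ = _ := by ring

theorem aux_trace_low {n : ℕ} {N : Matrix (Fin n) (Fin n) ℝ} (hN : N.PosSemidef)
    (x : Fin n → ℝ) (hx : x ⬝ᵥ x = 1) (l : ℝ) (hl : 0 ≤ l) (h : l ≤ x ⬝ᵥ (N *ᵥ x)) (k : ℕ) :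
    l ^ k ≤ (N ^ k).trace := by
  have h1 : ∀ k : ℕ, l ^ k ≤ x ⬝ᵥ (N ^ k *ᵥ x) := by
    intro k
    induction k with
    | zero => simp [hx]
    | succ k ih =>
      have := aux_cheb hN x k 1
      rw [hx, one_mul, pow_one] at this
      rw [pow_succ]
      exact (mul_le_mul ih h hl (le_trans (pow_nonneg hl k) ih)).trans this
  refine (h1 k).trans ?_
  obtain ⟨lam, u, ho, hq, ht⟩ := aux_spec hN.isHermitian
  have hlam : ∀ i, 0 ≤ lam i := by
    intro i
    have h1 := hq 1 (u i)
    simp only [pow_one, ho] at h1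
    simp at h1
    have := hN.dotProduct_mulVec_nonneg (u i)
    simp at this
    linarith
  rw [hq, ht]
  refine Finset.sum_le_sum fun i _ => ?_
  have h0 := hq 0 x
  simp [hx] at h0
  have : (u i ⬝ᵥ x) ^ 2 ≤ 1 := by
    rw [h0]
    exact Finset.single_le_sum (f := fun i => (u i ⬝ᵥ x) ^ 2) (fun i _ => sq_nonneg _)
      (Finset.mem_univ i)
  exact mul_le_of_le_one_right (pow_nonneg (hlam i) k) this

/-- the empirical second-moment matrix -/
noncomputable def auxM {n d : ℕ} (w : Fin d → Fin n → ℝ) {s : ℕ} (j : Fin s → Fin d) :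
    Matrix (Fin n) (Fin n) ℝ := ∑ t, vecMulVec (w (j t)) (w (j t))

theorem aux_M_quad {n d : ℕ} (w : Fin d → Fin n → ℝ) {s : ℕ} (j : Fin s → Fin d)
    (x : Fin n → ℝ) : x ⬝ᵥ (auxM w j *ᵥ x) = ∑ t, (w (j t) ⬝ᵥ x) ^ 2 := by
  rw [auxM, sum_mulVec, dotProduct_sum]
  refine Finset.sum_congr rfl fun t _ => ?_
  rw [vecMulVec_mulVec]
  simp only [op_smul_eq_smul, dotProduct_smul, smul_eq_mul]
  rw [dotProduct_comm x, sq]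

theorem aux_M_le {n d : ℕ} (w : Fin d → Fin n → ℝ) (ρ : ℝ) (hw : ∀ i, w i ⬝ᵥ w i ≤ ρ)
    {s : ℕ} (j : Fin s → Fin d) (x : Fin n → ℝ) :
    x ⬝ᵥ (auxM w j *ᵥ x) ≤ s * ρ * (x ⬝ᵥ x) := by
  rw [aux_M_quad]
  have hx : 0 ≤ x ⬝ᵥ x := by
    simp only [dotProduct]; exact Finset.sum_nonneg fun i _ => mul_self_nonneg _
  have : ∀ t ∈ Finset.univ, (w (j t) ⬝ᵥ x) ^ 2 ≤ ρ * (x ⬝ᵥ x) := by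
    intro t _
    have h1 : (w (j t) ⬝ᵥ x) ^ 2 ≤ (w (j t) ⬝ᵥ w (j t)) * (x ⬝ᵥ x) := by
      have := Finset.sum_mul_sq_le_sq_mul_sq Finset.univ (w (j t)) x
      simpa only [dotProduct, sq] using this
    exact h1.trans (mul_le_mul_of_nonneg_right (hw _) hx)
  refine (Finset.sum_le_sum this).trans (le_of_eq ?_)
  simp; ring

theorem aux_N_quad {n d : ℕ} (w : Fin d → Fin n → ℝ) (η : ℝ) {s : ℕ} (j : Fin s → Fin d)
    (x : Fin n → ℝ) :
    x ⬝ᵥ ((1 - η • auxM w j) *ᵥ x) = x ⬝ᵥ x - η * (x ⬝ᵥ (auxM w j *ᵥ x)) := by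
  rw [sub_mulVec, one_mulVec, smul_mulVec, dotProduct_sub, dotProduct_smul, smul_eq_mul]

theorem aux_N_bd {n d : ℕ} (w : Fin d → Fin n → ℝ) (ρ η : ℝ) (hw : ∀ i, w i ⬝ᵥ w i ≤ ρ)
    (hη : 0 ≤ η) {s : ℕ} (hs : η * (s * ρ) ≤ 1 / 2) (j : Fin s → Fin d) :
    (1 - η • auxM w j).PosSemidef ∧
    (∀ x : Fin n → ℝ, (1 / 2) * (x ⬝ᵥ x) ≤ x ⬝ᵥ ((1 - η • auxM w j) *ᵥ x)) ∧
    (∀ x : Fin n → ℝ, x ⬝ᵥ ((1 - η • auxM w j) *ᵥ x) ≤ x ⬝ᵥ x) := by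
  have hx : ∀ x : Fin n → ℝ, 0 ≤ x ⬝ᵥ x := fun x => by
    simp only [dotProduct]; exact Finset.sum_nonneg fun i _ => mul_self_nonneg _
  have hlo : ∀ x : Fin n → ℝ, (1 / 2) * (x ⬝ᵥ x) ≤ x ⬝ᵥ ((1 - η • auxM w j) *ᵥ x) := by
    intro x
    rw [aux_N_quad]
    have h1 := mul_le_mul_of_nonneg_left (aux_M_le w ρ hw j x) hη
    have h2 := mul_le_mul_of_nonneg_right hs (hx x)
    nlinarith
  refine ⟨?_, hlo, ?_⟩
  · refine PosSemidef.of_dotProduct_mulVec_nonneg ?_ ?_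
    · have : (auxM w j).IsHermitian := by
        unfold auxM
        rw [IsHermitian, conjTranspose_eq_transpose_of_trivial, transpose_sum]
        simp [transpose_vecMulVec]
      rw [IsHermitian, conjTranspose_eq_transpose_of_trivial] at *
      rw [transpose_sub, transpose_one, transpose_smul, this]
    · intro x
      have := hlo x
      have := hx x
      simp only [star_trivial]
      linarith
  · intro x
    rw [aux_N_quad, aux_M_quad]
    have : 0 ≤ η * ∑ t, (w (j t) ⬝ᵥ x) ^ 2 :=
      mul_nonneg hη (Finset.sum_nonneg fun i _ => sq_nonneg _)
    linarith

theorem aux_sum_cons {d s : ℕ} (f : (Fin (s + 1) → Fin d) → ℝ) :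
    ∑ j, f j = ∑ j : Fin s → Fin d, ∑ i, f (Fin.cons i j : Fin (s + 1) → Fin d) := by
  rw [← (Fin.consEquiv (fun _ : Fin (s + 1) => Fin d)).sum_comp, Fintype.sum_prod_type,
    Finset.sum_comm]
  rfl

theorem aux_expect {n d : ℕ} (w : Fin d → Fin n → ℝ) (p : Fin d → ℝ) (ρ η : ℝ)
    (hp : ∀ i, 0 ≤ p i) (hp1 : ∑ i, p i = 1)
    (hI : ∑ i, p i • vecMulVec (w i) (w i) = 1)
    (hρ : 0 ≤ ρ) (hw : ∀ i, w i ⬝ᵥ w i ≤ ρ) (hη : 0 ≤ η) (m : ℕ) (hθ : (m + 2 : ℝ) * η ≤ 1) (s : ℕ)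
    (hs : η * (s * ρ) ≤ 1 / 2) :
    ∑ j : Fin s → Fin d, (∏ t, p (j t)) * ((1 - η • auxM w j) ^ (m + 2)).trace
      ≤ n * (1 - (m + 2 : ℝ) * η * (1 - 4 * ((m + 2 : ℝ) * η) * ρ)) ^ s := by
  induction s with
  | zero => simp [auxM]
  | succ s ih =>
    have hs' : η * (s * ρ) ≤ 1 / 2 := by
      push_cast at hs
      nlinarith [mul_nonneg hη hρ]
    rw [aux_sum_cons]
    set θ : ℝ := (m + 2 : ℝ) * η with hθd
    have hθ0 : 0 ≤ θ := by positivity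
    have hκ : 0 ≤ 1 - θ * (1 - 4 * θ * ρ) := by
      have : 0 ≤ θ * (4 * θ * ρ) := by positivity
      nlinarith
    have hstep : ∀ j : Fin s → Fin d,
        ∑ i, p i * ((1 - η • auxM w (Fin.cons i j : Fin (s + 1) → Fin d)) ^ (m + 2)).trace
        ≤ (1 - θ * (1 - 4 * θ * ρ)) * ((1 - η • auxM w j) ^ (m + 2)).trace := by
      intro j
      obtain ⟨hN, hlo, hhi⟩ := aux_N_bd w ρ η hw hη hs' j
      set N := 1 - η • auxM w j with hNd
      have htr : ∀ A : Matrix (Fin n) (Fin n) ℝ, ∑ i, p i * (w i ⬝ᵥ (A *ᵥ w i)) = A.trace := by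
        intro A
        conv_rhs => rw [← Matrix.mul_one A, ← hI, Finset.mul_sum, trace_sum]
        refine Finset.sum_congr rfl fun i _ => ?_
        rw [Matrix.mul_smul, trace_smul, mul_vecMulVec, trace_vecMulVec, smul_eq_mul,
          dotProduct_comm]
      have h1 : ∀ i ∈ Finset.univ,
          p i * ((1 - η • auxM w (Fin.cons i j : Fin (s + 1) → Fin d)) ^ (m + 2)).trace
          ≤ p i * (N ^ (m + 2)).trace - θ * (p i * (w i ⬝ᵥ (N ^ (m + 1) *ᵥ w i))
            - θ * ρ * (p i * (w i ⬝ᵥ (N ^ m *ᵥ w i)))) := by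
        intro i _
        obtain ⟨hN', -, -⟩ := aux_N_bd w ρ η hw hη hs (Fin.cons i j)
        have hd : N - (1 - η • auxM w (Fin.cons i j : Fin (s + 1) → Fin d))
            = η • vecMulVec (w i) (w i) := by
          simp only [hNd, auxM, Fin.sum_univ_succ, Fin.cons_zero, Fin.cons_succ, smul_add]
          abel
        have := aux_step hN hN' (w i) η ρ hη (hw i) hd m
        have := mul_le_mul_of_nonneg_left this (hp i)
        rw [← hθd] at this
        linarith
      refine (Finset.sum_le_sum h1).trans ?_
      rw [Finset.sum_sub_distrib, ← Finset.sum_mul, hp1, ← Finset.mul_sum, Finset.sum_sub_distrib,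
        ← Finset.mul_sum, htr, htr]
      obtain ⟨h2, h3⟩ := aux_trace_bd hN.isHermitian hlo hhi m
      have h4 := mul_le_mul_of_nonneg_left h3 (mul_nonneg hθ0 (mul_nonneg hθ0 hρ))
      have h5 := mul_le_mul_of_nonneg_left h2 hθ0
      nlinarith
    calc ∑ j : Fin s → Fin d, ∑ i, (∏ t, p ((Fin.cons i j : Fin (s + 1) → Fin d) t))
          * ((1 - η • auxM w (Fin.cons i j : Fin (s + 1) → Fin d)) ^ (m + 2)).trace
        = ∑ j : Fin s → Fin d, (∏ t, p (j t)) *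
          ∑ i, p i * ((1 - η • auxM w (Fin.cons i j : Fin (s + 1) → Fin d)) ^ (m + 2)).trace := by
          refine Finset.sum_congr rfl fun j _ => ?_
          rw [Finset.mul_sum]
          refine Finset.sum_congr rfl fun i _ => ?_
          rw [Fin.prod_univ_succ]
          simp only [Fin.cons_zero, Fin.cons_succ]
          ring
      _ ≤ ∑ j : Fin s → Fin d, (∏ t, p (j t)) *
          ((1 - θ * (1 - 4 * θ * ρ)) * ((1 - η • auxM w j) ^ (m + 2)).trace) :=
          Finset.sum_le_sum fun j _ =>
            mul_le_mul_of_nonneg_left (hstep j) (Finset.prod_nonneg fun t _ => hp _)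
      _ = (1 - θ * (1 - 4 * θ * ρ)) * ∑ j : Fin s → Fin d, (∏ t, p (j t)) *
          ((1 - η • auxM w j) ^ (m + 2)).trace := by
          rw [Finset.mul_sum]
          exact Finset.sum_congr rfl fun j _ => by ring
      _ ≤ _ := by
          refine (mul_le_mul_of_nonneg_left (ih hs') hκ).trans (le_of_eq ?_)
          ring

theorem aux_total {d : ℕ} (p : Fin d → ℝ) (hp1 : ∑ i, p i = 1) (s : ℕ) :
    ∑ j : Fin s → Fin d, ∏ t, p (j t) = 1 := by
  rw [← Fintype.piFinset_univ, ← Finset.prod_univ_sum]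
  simp [hp1]

/-- lower tail of the matrix Chernoff bound -/
theorem aux_chernoff {n d : ℕ} (w : Fin d → Fin n → ℝ) (p : Fin d → ℝ) (δ : ℝ)
    (hn : 0 < n) (hδ : 0 < δ) (hδ1 : δ ≤ 1)
    (hp : ∀ i, 0 ≤ p i) (hp1 : ∑ i, p i = 1)
    (hI : ∑ i, p i • vecMulVec (w i) (w i) = 1)
    (hw : ∀ i, w i ⬝ᵥ w i ≤ n) (r : ℕ)
    (hr : (n : ℝ) * Real.exp (-(δ ^ 2 * r / (64 * n))) ≤ 1 / 100)
    (G : Set (Fin r → Fin d))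
    (hG : ∀ j, (∀ x : Fin n → ℝ, (1 - δ) * r * (x ⬝ᵥ x) ≤ x ⬝ᵥ (auxM w j *ᵥ x)) → j ∈ G) :
    0.99 ≤ ∑ j : Fin r → Fin d, Set.indicator G (fun j => ∏ t, p (j t)) j := by
  have hn' : (0 : ℝ) < n := by exact_mod_cast hn
  have hn1 : (1 : ℝ) ≤ n := by exact_mod_cast hn
  set θ : ℝ := δ / (16 * n) with hθ
  have hθ0 : 0 < θ := by positivity
  have hθn : θ * n = δ / 16 := by rw [hθ]; field_simp
  have hθ1 : θ ≤ 1 := by nlinarith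
  obtain ⟨m, hm⟩ := exists_nat_ge (2 * θ * r * n / δ)
  have hm2 : (0 : ℝ) < m + 2 := by positivity
  set η : ℝ := θ / (m + 2) with hη
  have hη0 : 0 < η := by positivity
  have hmη : (m + 2 : ℝ) * η = θ := by rw [hη]; field_simp
  have hbig : η * (r * n) ≤ δ / 2 := by
    rw [div_le_iff₀ hδ] at hm
    rw [hη, div_mul_eq_mul_div, div_le_iff₀ hm2]
    nlinarith
  have hr0 : (0 : ℝ) ≤ r := by positivity
  have hηr : η * r ≤ δ / 2 := by
    refine le_trans ?_ hbig
    exact mul_le_mul_of_nonneg_left (by nlinarith) hη0.le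
  have hE := aux_expect w p n η hp hp1 hI hn'.le hw hη0.le m (by rw [hmη]; exact hθ1) r
    (by linarith)
  rw [hmη] at hE
  set l : ℝ := 1 - η * ((1 - δ) * r) with hl
  have hηr0 : 0 ≤ η * r := by positivity
  have hl1 : 1 - δ / 2 ≤ l := by nlinarith
  have hl0 : 0 < l := by linarith
  -- l ^ (m+2) is not too small
  have hlow : Real.exp (-(θ * r * (1 - δ / 2))) ≤ l ^ (m + 2) := by
    have h1 : Real.exp (-(η * r * (1 - δ / 2))) ≤ l := by
      have h2 : 1 - l⁻¹ ≤ Real.log l := Real.one_sub_inv_le_log_of_pos hl0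
      have h3 : -(η * r * (1 - δ / 2)) ≤ 1 - l⁻¹ := by
        have h4 : 1 - l⁻¹ = -(η * ((1 - δ) * r)) / l := by
          field_simp
          rw [hl]; ring
        rw [h4, le_div_iff₀ hl0]
        have h5 : (1 - δ / 2) * (1 - δ / 2) ≤ (1 - δ / 2) * l :=
          mul_le_mul_of_nonneg_left hl1 (by linarith)
        have h6 : 1 - δ ≤ (1 - δ / 2) * l := by nlinarith
        have := mul_le_mul_of_nonneg_left h6 hηr0
        linarith
      calc _ ≤ Real.exp (Real.log l) := Real.exp_le_exp.2 (h3.trans h2)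
        _ = l := Real.exp_log hl0
    have h2 := pow_le_pow_left₀ (Real.exp_pos _).le h1 (m + 2)
    rw [← Real.exp_nat_mul] at h2
    refine le_trans (le_of_eq ?_) h2
    congr 1
    push_cast
    rw [← hmη]; ring
  have hup : (1 - θ * (1 - 4 * θ * n)) ^ r ≤ Real.exp (-(θ * (1 - 4 * θ * n) * r)) := by
    have h0 : 0 ≤ 1 - θ * (1 - 4 * θ * n) := by
      have : 0 ≤ θ * (4 * θ * n) := by positivity
      nlinarith
    have h1 : 1 - θ * (1 - 4 * θ * n) ≤ Real.exp (-(θ * (1 - 4 * θ * n))) := by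
      have := Real.add_one_le_exp (-(θ * (1 - 4 * θ * n)))
      linarith
    have h2 := pow_le_pow_left₀ h0 h1 r
    rw [← Real.exp_nat_mul] at h2
    refine h2.trans (le_of_eq ?_)
    congr 1; ring
  -- pointwise Markov
  have hpt : ∀ j ∈ Finset.univ, (∏ t, p (j t)) * l ^ (m + 2)
      ≤ Set.indicator G (fun j => ∏ t, p (j t)) j * l ^ (m + 2)
        + (∏ t, p (j t)) * ((1 - η • auxM w j) ^ (m + 2)).trace := by
    intro j _
    obtain ⟨hN, -, -⟩ := aux_N_bd w n η hw hη0.le (s := r) (by linarith) j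
    have hP : 0 ≤ ∏ t, p (j t) := Finset.prod_nonneg fun t _ => hp _
    have htr0 : 0 ≤ ((1 - η • auxM w j) ^ (m + 2)).trace := (hN.pow _).trace_nonneg
    by_cases hj : j ∈ G
    · rw [Set.indicator_of_mem hj]
      have := mul_nonneg hP htr0
      linarith
    · rw [Set.indicator_of_notMem hj, zero_mul, zero_add]
      refine mul_le_mul_of_nonneg_left ?_ hP
      have hj' := mt (hG j) hj
      push Not at hj'
      obtain ⟨x, hx⟩ := hj'
      have hx0 : 0 < x ⬝ᵥ x := by
        have h1 : 0 ≤ x ⬝ᵥ x := by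
          simp only [dotProduct]; exact Finset.sum_nonneg fun i _ => mul_self_nonneg _
        refine lt_of_le_of_ne h1 fun h => ?_
        have h2 : x = 0 := dotProduct_self_eq_zero.1 h.symm
        subst h2
        simp at hx
      set a := (Real.sqrt (x ⬝ᵥ x))⁻¹ with ha
      have ha2 : a * a * (x ⬝ᵥ x) = 1 := by
        rw [ha, ← mul_inv, Real.mul_self_sqrt hx0.le, inv_mul_cancel₀ hx0.ne']
      refine aux_trace_low hN (a • x) ?_ l hl0.le ?_ _
      · rw [smul_dotProduct, dotProduct_smul, smul_eq_mul, smul_eq_mul, ← mul_assoc, ha2]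
      · rw [mulVec_smul, smul_dotProduct, dotProduct_smul, smul_eq_mul, smul_eq_mul, ← mul_assoc,
          aux_N_quad, mul_sub, ha2, hl]
        have h1 := mul_le_mul_of_nonneg_left hx.le
          (mul_nonneg hη0.le (mul_self_nonneg a))
        have h2 : η * (a * a) * ((1 - δ) * r * (x ⬝ᵥ x))
          = η * ((1 - δ) * r) * (a * a * (x ⬝ᵥ x)) := by ring
        rw [h2, ha2] at h1
        linarith
  have hsum := Finset.sum_le_sum hpt
  rw [Finset.sum_add_distrib, ← Finset.sum_mul, ← Finset.sum_mul, aux_total p hp1, one_mul] at hsum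
  set Q := ∑ j : Fin r → Fin d, Set.indicator G (fun j => ∏ t, p (j t)) j with hQ
  have hfin : (n : ℝ) * (1 - θ * (1 - 4 * θ * n)) ^ r ≤ 1 / 100 * l ^ (m + 2) := by
    calc (n : ℝ) * (1 - θ * (1 - 4 * θ * n)) ^ r
        ≤ n * Real.exp (-(θ * (1 - 4 * θ * n) * r)) := mul_le_mul_of_nonneg_left hup hn'.le
      _ = (n * Real.exp (-(δ ^ 2 * r / (64 * n)))) * Real.exp (-(θ * r * (1 - δ / 2))) := by
          rw [mul_assoc (n : ℝ) (Real.exp _), ← Real.exp_add]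
          congr 2
          rw [hθ]; field_simp; ring
      _ ≤ 1 / 100 * l ^ (m + 2) := by
          exact mul_le_mul hr hlow (Real.exp_pos _).le (by norm_num)
  have hlp : 0 < l ^ (m + 2) := pow_pos hl0 _
  have : 0.99 * l ^ (m + 2) ≤ Q * l ^ (m + 2) := by
    norm_num
    linarith
  exact le_of_mul_le_mul_right this hlp

theorem aux_euclNorm_sq {n : ℕ} (x : Fin n → ℝ) : euclNorm x ^ 2 = x ⬝ᵥ x := by
  rw [euclNorm, Real.sq_sqrt (Finset.sum_nonneg fun i _ => sq_nonneg _), dotProduct]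
  exact Finset.sum_congr rfl fun i _ => sq _

/-- **Theorem 2 (margin preservation by leverage-score feature selection).**
There is an absolute constant `c > 0` such that, in the SVM dual setup with
`r ≥ c·(ρ/ε²)·log(10ρ/ε²)` indices drawn i.i.d. from the leverage-score
distribution of `V`, with probability at least `0.99` the following holds: for
every maximizer `α*` of `f` over `K` and every maximizer `α̃*` of `f̃` over `K`
satisfying the dual optimality identities,
`(1 − ε)·‖RᵀXᵀYα̃*‖₂² ≤ ‖XᵀYα*‖₂²`.  (The probability of the event is the sum,
over index tuples `j` in the event, of `∏ t, p_{j_t}`.) -/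
theorem svm_margin_preservation_leverage_scores :
    ∃ c : ℝ, 0 < c ∧
      ∀ (p d ρ : ℕ), 0 < ρ →
      ∀ ε : ℝ, ε ∈ Set.Ioo (0 : ℝ) 1 →
      ∀ X : Matrix (Fin p) (Fin d) ℝ, X.rank = ρ →
      ∀ (U : Matrix (Fin p) (Fin ρ) ℝ) (S : Matrix (Fin ρ) (Fin ρ) ℝ)
        (V : Matrix (Fin d) (Fin ρ) ℝ),
        Uᵀ * U = 1 → Vᵀ * V = 1 →
        (∃ σ : Fin ρ → ℝ, (∀ i, 0 < σ i) ∧ S = Matrix.diagonal σ) →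
        X = U * S * Vᵀ →
      ∀ y : Fin p → ℝ, (∀ i, y i = 1 ∨ y i = -1) →
      ∀ C : ℝ, 0 < C →
      ∀ r : ℕ, c * ((ρ : ℝ) / ε ^ 2) * Real.log (10 * (ρ : ℝ) / ε ^ 2) ≤ (r : ℝ) →
        0.99 ≤ ∑ j : Fin r → Fin d,
          Set.indicator
            {j : Fin r → Fin d |
              ∀ αs : Fin p → ℝ,
                svmFeasible y C αs →
                (∀ β, svmFeasible y C β → svmDualObj X y β ≤ svmDualObj X y αs) →
                ∑ i, αs i = euclNorm (Xᵀ.mulVec ((Matrix.diagonal y).mulVec αs)) ^ 2 →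
              ∀ αt : Fin p → ℝ,
                svmFeasible y C αt →
                (∀ β, svmFeasible y C β →
                  svmDualObjRed X (lvgMatrix V r j) y β
                    ≤ svmDualObjRed X (lvgMatrix V r j) y αt) →
                ∑ i, αt i
                  = euclNorm ((lvgMatrix V r j)ᵀ.mulVec
                      (Xᵀ.mulVec ((Matrix.diagonal y).mulVec αt))) ^ 2 →
                (1 - ε) * euclNorm ((lvgMatrix V r j)ᵀ.mulVec
                      (Xᵀ.mulVec ((Matrix.diagonal y).mulVec αt))) ^ 2
                  ≤ euclNorm (Xᵀ.mulVec ((Matrix.diagonal y).mulVec αs)) ^ 2}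
            (fun j => ∏ t, lvgProb V (j t)) j := by
  refine ⟨512, by norm_num, ?_⟩
  intro p d ρ hρ ε hε X _ U S V _ hV _ hX y _ C _ r hr
  obtain ⟨hε0, hε1⟩ := hε
  have hρ' : (0 : ℝ) < ρ := by exact_mod_cast hρ
  have hρ1 : (1 : ℝ) ≤ ρ := by exact_mod_cast hρ
  have hε2 : ε ^ 2 ≤ 1 := by nlinarith
  have hε2' : 0 < ε ^ 2 := by positivity
  -- the number of samples
  have hlogle : Real.log (10 * ρ) ≤ Real.log (10 * (ρ : ℝ) / ε ^ 2) := by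
    refine Real.log_le_log (by positivity) ?_
    rw [le_div_iff₀ hε2']
    nlinarith
  have hlog0 : 0 < Real.log (10 * ρ) := Real.log_pos (by linarith)
  have hr1 : 2 * Real.log (10 * ρ) ≤ (ε / 2) ^ 2 * r / (64 * ρ) := by
    have h1 : 512 * ((ρ : ℝ) / ε ^ 2) * Real.log (10 * ρ) ≤ r :=
      le_trans (mul_le_mul_of_nonneg_left hlogle (by positivity)) hr
    rw [le_div_iff₀ (by positivity)]
    have h2 := mul_le_mul_of_nonneg_left h1 hε2'.le
    have h3 : ε ^ 2 * (512 * ((ρ : ℝ) / ε ^ 2) * Real.log (10 * ρ))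
        = 512 * ρ * Real.log (10 * ρ) := by field_simp
    rw [h3] at h2
    nlinarith
  have hr0 : (0 : ℝ) < r := by
    refine lt_of_lt_of_le ?_ hr
    have := lt_of_lt_of_le hlog0 hlogle
    positivity
  have hexp : (ρ : ℝ) * Real.exp (-((ε / 2) ^ 2 * r / (64 * ρ))) ≤ 1 / 100 := by
    have h1 : Real.exp (-((ε / 2) ^ 2 * r / (64 * ρ))) ≤ Real.exp (-(2 * Real.log (10 * ρ))) :=
      Real.exp_le_exp.2 (by linarith)
    have h2 : Real.exp (-(2 * Real.log (10 * ρ))) = ((10 * (ρ : ℝ)) ^ 2)⁻¹ := by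
      rw [Real.exp_neg, two_mul, Real.exp_add, Real.exp_log (by positivity), sq]
    rw [h2] at h1
    refine (mul_le_mul_of_nonneg_left h1 hρ'.le).trans ?_
    rw [← div_eq_mul_inv, div_le_div_iff₀ (by positivity) (by norm_num)]
    nlinarith
  -- probabilities
  have hrow0 : ∀ i, 0 ≤ ∑ k, V i k ^ 2 := fun i => Finset.sum_nonneg fun k _ => sq_nonneg _
  have hp : ∀ i, 0 ≤ lvgProb V i := fun i => div_nonneg (hrow0 i) hρ'.le
  have hVe : ∀ k l, ∑ i, V i k * V i l = (1 : Matrix (Fin ρ) (Fin ρ) ℝ) k l := by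
    intro k l
    rw [← hV]; rfl
  have hp1 : ∑ i, lvgProb V i = 1 := by
    simp only [lvgProb]
    rw [← Finset.sum_div, Finset.sum_comm]
    have : ∀ k, ∑ i, V i k ^ 2 = 1 := by
      intro k
      have := hVe k k
      simpa [sq] using this
    simp only [this]
    simp [hρ'.ne']
  have hpz : ∀ i, lvgProb V i = 0 → ∀ k, V i k = 0 := by
    intro i hi k
    have h1 : ∑ k, V i k ^ 2 = 0 := by
      rw [lvgProb, div_eq_zero_iff] at hi
      exact hi.resolve_right hρ'.ne'
    have := (Finset.sum_eq_zero_iff_of_nonneg (fun k _ => sq_nonneg (V i k))).1 h1 k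
      (Finset.mem_univ k)
    exact pow_eq_zero_iff (two_ne_zero) |>.1 this
  set w : Fin d → Fin ρ → ℝ := fun i k => V i k / Real.sqrt (lvgProb V i) with hw
  have hww : ∀ i k l, lvgProb V i * (w i k * w i l) = V i k * V i l := by
    intro i k l
    rcases eq_or_lt_of_le (hp i) with h | h
    · rw [hpz i h.symm k, ← h]; ring
    · have hs : Real.sqrt (lvgProb V i) ≠ 0 := (Real.sqrt_pos.2 h).ne'
      have hs2 := Real.sq_sqrt (hp i)
      simp only [hw]
      rw [div_mul_div_comm, Real.mul_self_sqrt (hp i), mul_div_cancel₀ _ h.ne']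
  have hI : ∑ i, lvgProb V i • vecMulVec (w i) (w i) = 1 := by
    ext k l
    rw [Matrix.sum_apply, ← hVe k l]
    refine Finset.sum_congr rfl fun i _ => ?_
    rw [Matrix.smul_apply, vecMulVec_apply, smul_eq_mul, hww]
  have hwn : ∀ i, w i ⬝ᵥ w i ≤ ρ := by
    intro i
    rcases eq_or_lt_of_le (hp i) with h | h
    · have : w i = 0 := by
        ext k
        simp [hw, hpz i h.symm k]
      rw [this]; simp
    · have h1 : lvgProb V i * (w i ⬝ᵥ w i) = lvgProb V i * ρ := by
        simp only [dotProduct]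
        rw [Finset.mul_sum]
        simp only [hww]
        rw [lvgProb, div_mul_cancel₀ _ hρ'.ne']
        exact Finset.sum_congr rfl fun k _ => (sq _).symm
      exact (mul_left_cancel₀ h.ne' h1).le
  refine aux_chernoff w (lvgProb V) (ε / 2) hρ (by positivity) (by linarith) hp hp1 hI hwn r hexp
    _ ?_
  intro j hj αs hαs hopt hsum αt hαt _ hsumt
  -- the deterministic part
  set x : Fin ρ → ℝ := (U * S)ᵀ *ᵥ (Matrix.diagonal y *ᵥ αt) with hx
  have hz : Xᵀ *ᵥ (Matrix.diagonal y *ᵥ αt) = V *ᵥ x := by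
    rw [hX, transpose_mul, transpose_transpose, ← mulVec_mulVec]
  have h1 : euclNorm (Xᵀ *ᵥ (Matrix.diagonal y *ᵥ αt)) ^ 2 = x ⬝ᵥ x := by
    rw [aux_euclNorm_sq, hz, dotProduct_mulVec, ← mulVec_transpose, mulVec_mulVec, hV, one_mulVec]
  have h2 : euclNorm ((lvgMatrix V r j)ᵀ *ᵥ (Xᵀ *ᵥ (Matrix.diagonal y *ᵥ αt))) ^ 2
      = (x ⬝ᵥ (auxM w j *ᵥ x)) / r := by
    rw [aux_euclNorm_sq, hz, aux_M_quad, Finset.sum_div, dotProduct]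
    refine Finset.sum_congr rfl fun t _ => ?_
    have e1 : ((lvgMatrix V r j)ᵀ *ᵥ (V *ᵥ x)) t
        = 1 / Real.sqrt (r * lvgProb V (j t)) * (V *ᵥ x) (j t) := by
      simp [mulVec, dotProduct, lvgMatrix]
    have e2 : w (j t) ⬝ᵥ x = (V *ᵥ x) (j t) / Real.sqrt (lvgProb V (j t)) := by
      simp only [hw, mulVec, dotProduct, Finset.sum_div]
      exact Finset.sum_congr rfl fun k _ => by ring
    have e3 : Real.sqrt (r : ℝ) ^ 2 = r := Real.sq_sqrt hr0.le
    rw [e1, e2, Real.sqrt_mul hr0.le]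
    nth_rewrite 3 [← e3]
    rw [← sq, ← div_pow]
    congr 1
    rw [div_div, one_div_mul_eq_div, mul_comm]
  have h3 := hj x
  have h4 := hopt αt hαt
  simp only [svmDualObj] at h4
  rw [hsum, hsumt, h1] at h4
  have h5 : (1 - ε / 2) * (x ⬝ᵥ x) ≤ (x ⬝ᵥ (auxM w j *ᵥ x)) / r := by
    rw [le_div_iff₀ hr0]; linarith
  rw [← h2] at h5
  set A := euclNorm (Xᵀ *ᵥ (Matrix.diagonal y *ᵥ αs)) ^ 2
  set B := euclNorm ((lvgMatrix V r j)ᵀ *ᵥ (Xᵀ *ᵥ (Matrix.diagonal y *ᵥ αt))) ^ 2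
  have hxx : 0 ≤ x ⬝ᵥ x := by rw [← h1]; positivity
  have h6 : x ⬝ᵥ x ≤ (1 + ε) * B := by
    have h7 := mul_le_mul_of_nonneg_left h5 (by linarith : 0 ≤ 1 + ε)
    have h8 : 1 ≤ (1 + ε) * (1 - ε / 2) := by nlinarith
    have h9 := mul_le_mul_of_nonneg_right h8 hxx
    linarith
  linarith
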